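/- arXiv:2304.14386 — 3 statements merged into one kernel-verified Lean document; each statement's English description precedes it below -/
import Mathlib

section
/- Let g : ℝ^p → ℝ^p be twice continuously differentiable with Jacobian G, let W be symmetric positive definite with λ_min(W) ≥ λ̲_W > 0 and λ_max(W) ≤ λ̄_W, let θ̂ satisfy G(θ̂)ᵀ W g(θ̂) = 0, suppose G is Lipschitz with constant L and σ_min[G(θ_k)] ≥ σ̲ > 0 at a point θ_k. Then the Gauss-Newton update θ_{k+1} = θ_k − γ[G(θ_k)ᵀ W G(θ_k)]⁻¹ G(θ_k)ᵀ W g(θ_k) with γ ∈ (0,1) satisfies the one-step bound ‖θ_{k+1} − θ̂‖ ≤ (1 − γ + γ[σ̲⁻¹·√(λ̄_W/λ̲_W)·L·‖θ_k − θ̂‖ + σ̲⁻²·(√λ̄_W/λ̲_W)·L·‖g(θ̂)‖_W])·‖θ_k − θ̂‖. -/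
open Matrix Set MeasureTheory
open scoped BigOperators

noncomputable section

/-- Euclidean norm of a vector in `Fin n → ℝ`. -/
def enorm' {n : ℕ} (v : Fin n → ℝ) : ℝ := Real.sqrt (∑ i, v i ^ 2)

/-- Smallest singular value of a matrix. -/
def sigMin {m p : ℕ} (A : Matrix (Fin m) (Fin p) ℝ) : ℝ :=
  sInf {c : ℝ | ∃ v : Fin p → ℝ, enorm' v = 1 ∧ c = enorm' (A *ᵥ v)}

/-- Largest singular value of a matrix (operator norm). -/
def sigMax {m p : ℕ} (A : Matrix (Fin m) (Fin p) ℝ) : ℝ :=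
  sSup {c : ℝ | ∃ v : Fin p → ℝ, enorm' v = 1 ∧ c = enorm' (A *ᵥ v)}

/-- Smallest eigenvalue of a (symmetric) square matrix, via the Rayleigh quotient. -/
def lamMin {n : ℕ} (A : Matrix (Fin n) (Fin n) ℝ) : ℝ :=
  sInf {c : ℝ | ∃ v : Fin n → ℝ, enorm' v = 1 ∧ c = v ⬝ᵥ (A *ᵥ v)}

/-- Largest eigenvalue of a (symmetric) square matrix, via the Rayleigh quotient. -/
def lamMax {n : ℕ} (A : Matrix (Fin n) (Fin n) ℝ) : ℝ :=
  sSup {c : ℝ | ∃ v : Fin n → ℝ, enorm' v = 1 ∧ c = v ⬝ᵥ (A *ᵥ v)}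

/-- Weighted norm `‖v‖_W = √(vᵀ W v)`. -/
def wnorm {m : ℕ} (W : Matrix (Fin m) (Fin m) ℝ) (v : Fin m → ℝ) : ℝ :=
  Real.sqrt (v ⬝ᵥ (W *ᵥ v))

/-- A matrix viewed as a continuous linear map `ℝ^p → ℝ^m`. -/
def toCLM {m p : ℕ} (A : Matrix (Fin m) (Fin p) ℝ) : (Fin p → ℝ) →L[ℝ] (Fin m → ℝ) :=
  LinearMap.toContinuousLinearMap A.mulVecLin

lemma aux_sq {n : ℕ} (v : Fin n → ℝ) : enorm' v ^ 2 = v ⬝ᵥ v := by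
  unfold enorm'
  rw [Real.sq_sqrt (Finset.sum_nonneg fun i _ => sq_nonneg _)]
  simp [dotProduct, sq]

lemma aux_nonneg {n : ℕ} (v : Fin n → ℝ) : 0 ≤ enorm' v := Real.sqrt_nonneg _

lemma aux_eq_norm {n : ℕ} (v : Fin n → ℝ) : enorm' v = ‖WithLp.toLp 2 v‖ := by
  rw [EuclideanSpace.norm_eq]; simp [enorm']

lemma aux_add {n : ℕ} (v w : Fin n → ℝ) : enorm' (v + w) ≤ enorm' v + enorm' w := by
  simp only [aux_eq_norm, WithLp.toLp_add]; exact norm_add_le _ _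

lemma aux_smul {n : ℕ} (c : ℝ) (v : Fin n → ℝ) : enorm' (c • v) = |c| * enorm' v := by
  simp only [aux_eq_norm, WithLp.toLp_smul, norm_smul, Real.norm_eq_abs]

lemma aux_cs {n : ℕ} (v w : Fin n → ℝ) : v ⬝ᵥ w ≤ enorm' v * enorm' w := by
  have := Finset.sum_mul_sq_le_sq_mul_sq Finset.univ v w
  unfold enorm'
  rw [← Real.sqrt_mul (Finset.sum_nonneg fun i _ => sq_nonneg _)]
  exact Real.le_sqrt_of_sq_le this

lemma aux_eq_zero {n : ℕ} (v : Fin n → ℝ) (h : enorm' v = 0) : v = 0 := by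
  have := aux_sq v
  rw [h] at this
  exact dotProduct_self_eq_zero.1 (by simpa using this.symm)

lemma aux_unit {n : ℕ} (v : Fin n → ℝ) (h : v ≠ 0) :
    0 < enorm' v ∧ ∃ u : Fin n → ℝ, enorm' u = 1 ∧ v = enorm' v • u := by
  have h0 : 0 < enorm' v := lt_of_le_of_ne (aux_nonneg v) fun h' => h (aux_eq_zero v h'.symm)
  refine ⟨h0, (enorm' v)⁻¹ • v, ?_, ?_⟩
  · rw [aux_smul, abs_of_pos (inv_pos.2 h0), inv_mul_cancel₀ h0.ne']
  · rw [smul_smul, mul_inv_cancel₀ h0.ne', one_smul]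

lemma aux_cont {n : ℕ} : Continuous (fun v : Fin n → ℝ => enorm' v) := by
  unfold enorm'; fun_prop

lemma aux_compact {n : ℕ} : IsCompact {v : Fin n → ℝ | enorm' v = 1} := by
  apply Metric.isCompact_of_isClosed_isBounded
  · exact isClosed_eq aux_cont continuous_const
  · refine (Metric.isBounded_closedBall (x := (0 : Fin n → ℝ)) (r := 1)).subset ?_
    intro v hv
    rw [mem_closedBall_zero_iff, pi_norm_le_iff_of_nonneg zero_le_one]
    intro i
    have h1 : v i ^ 2 ≤ enorm' v ^ 2 := by
      rw [aux_sq]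
      simp only [dotProduct, ← sq]
      exact Finset.single_le_sum (f := fun i => v i ^ 2) (fun i _ => sq_nonneg _) (Finset.mem_univ i)
    rw [hv] at h1
    rw [Real.norm_eq_abs]
    exact abs_le_one_iff_mul_self_le_one.2 (by nlinarith)

lemma aux_bdd {n : ℕ} (f : (Fin n → ℝ) → ℝ) (hf : Continuous f) :
    BddAbove {c : ℝ | ∃ v : Fin n → ℝ, enorm' v = 1 ∧ c = f v} ∧
    BddBelow {c : ℝ | ∃ v : Fin n → ℝ, enorm' v = 1 ∧ c = f v} := by
  have h : {c : ℝ | ∃ v : Fin n → ℝ, enorm' v = 1 ∧ c = f v} = f '' {v | enorm' v = 1} := by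
    ext c; simp [eq_comm]
  rw [h]
  have := aux_compact.image (f := f) hf
  exact ⟨this.bddAbove, this.bddBelow⟩

lemma aux_cont1 {m n : ℕ} (A : Matrix (Fin m) (Fin n) ℝ) :
    Continuous (fun v : Fin n → ℝ => enorm' (A *ᵥ v)) :=
  aux_cont.comp (Continuous.matrix_mulVec continuous_const continuous_id)

lemma aux_cont2 {n : ℕ} (A : Matrix (Fin n) (Fin n) ℝ) :
    Continuous (fun v : Fin n → ℝ => v ⬝ᵥ (A *ᵥ v)) :=
  Continuous.dotProduct continuous_id (Continuous.matrix_mulVec continuous_const continuous_id)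

lemma aux_zero {n : ℕ} : enorm' (0 : Fin n → ℝ) = 0 := by simp [enorm']

lemma aux_sigMin {m n : ℕ} (A : Matrix (Fin m) (Fin n) ℝ) (v : Fin n → ℝ) :
    sigMin A * enorm' v ≤ enorm' (A *ᵥ v) := by
  by_cases h : v = 0
  · simp [h, aux_zero]
  obtain ⟨h0, u, hu, hv⟩ := aux_unit v h
  have := csInf_le (aux_bdd _ (aux_cont1 A)).2 ⟨u, hu, rfl⟩
  have e : enorm' (A *ᵥ v) = enorm' v * enorm' (A *ᵥ u) := by
    conv_lhs => rw [hv, mulVec_smul, aux_smul, abs_of_pos h0]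
  rw [e, mul_comm]
  exact mul_le_mul_of_nonneg_left this h0.le

lemma aux_sigMax {m n : ℕ} (A : Matrix (Fin m) (Fin n) ℝ) (v : Fin n → ℝ) :
    enorm' (A *ᵥ v) ≤ sigMax A * enorm' v := by
  by_cases h : v = 0
  · simp [h, aux_zero]
  obtain ⟨h0, u, hu, hv⟩ := aux_unit v h
  have := le_csSup (aux_bdd _ (aux_cont1 A)).1 ⟨u, hu, rfl⟩
  have e : enorm' (A *ᵥ v) = enorm' v * enorm' (A *ᵥ u) := by
    conv_lhs => rw [hv, mulVec_smul, aux_smul, abs_of_pos h0]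
  rw [e, mul_comm]
  exact mul_le_mul_of_nonneg_right this h0.le

lemma aux_quad {n : ℕ} (A : Matrix (Fin n) (Fin n) ℝ) (c : ℝ) (u : Fin n → ℝ) :
    (c • u) ⬝ᵥ (A *ᵥ (c • u)) = c ^ 2 * (u ⬝ᵥ (A *ᵥ u)) := by
  rw [mulVec_smul, smul_dotProduct, dotProduct_smul, smul_eq_mul, smul_eq_mul]; ring

lemma aux_lamMin {n : ℕ} (A : Matrix (Fin n) (Fin n) ℝ) (v : Fin n → ℝ) :
    lamMin A * enorm' v ^ 2 ≤ v ⬝ᵥ (A *ᵥ v) := by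
  by_cases h : v = 0
  · simp [h, aux_zero]
  obtain ⟨h0, u, hu, hv⟩ := aux_unit v h
  have := csInf_le (aux_bdd _ (aux_cont2 A)).2 ⟨u, hu, rfl⟩
  have e : v ⬝ᵥ (A *ᵥ v) = enorm' v ^ 2 * (u ⬝ᵥ (A *ᵥ u)) := by
    rw [← aux_quad, ← hv]
  rw [e, mul_comm]
  exact mul_le_mul_of_nonneg_left this (by positivity)

lemma aux_lamMax {n : ℕ} (A : Matrix (Fin n) (Fin n) ℝ) (v : Fin n → ℝ) :
    v ⬝ᵥ (A *ᵥ v) ≤ lamMax A * enorm' v ^ 2 := by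
  by_cases h : v = 0
  · simp [h, aux_zero]
  obtain ⟨h0, u, hu, hv⟩ := aux_unit v h
  have := le_csSup (aux_bdd _ (aux_cont2 A)).1 ⟨u, hu, rfl⟩
  have e : v ⬝ᵥ (A *ᵥ v) = enorm' v ^ 2 * (u ⬝ᵥ (A *ᵥ u)) := by
    rw [← aux_quad, ← hv]
  rw [e, mul_comm]
  exact mul_le_mul_of_nonneg_right this (by positivity)

/-- `‖W v‖² ≤ Whi · vᵀ W v`. -/
lemma aux_W {n : ℕ} (W : Matrix (Fin n) (Fin n) ℝ) (hs : Wᵀ = W) (Whi : ℝ) (hpos : 0 < Whi)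
    (h0 : ∀ v, 0 ≤ v ⬝ᵥ (W *ᵥ v)) (h1 : ∀ v, v ⬝ᵥ (W *ᵥ v) ≤ Whi * enorm' v ^ 2)
    (v : Fin n → ℝ) : enorm' (W *ᵥ v) ^ 2 ≤ Whi * (v ⬝ᵥ (W *ᵥ v)) := by
  set u := W *ᵥ v with hu
  have a := h0 (v - Whi⁻¹ • u)
  have b := h1 u
  have e1 : v ⬝ᵥ (W *ᵥ u) = u ⬝ᵥ u := by
    rw [dotProduct_mulVec, ← mulVec_transpose, hs, ← hu]
  have e : (v - Whi⁻¹ • u) ⬝ᵥ (W *ᵥ (v - Whi⁻¹ • u))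
      = v ⬝ᵥ u - 2 * Whi⁻¹ * (u ⬝ᵥ u) + Whi⁻¹ ^ 2 * (u ⬝ᵥ (W *ᵥ u)) := by
    simp only [mulVec_sub, mulVec_smul, sub_dotProduct, dotProduct_sub, smul_dotProduct,
      dotProduct_smul, smul_eq_mul, e1, ← hu]
    ring
  rw [e, ← aux_sq] at a
  have c : Whi⁻¹ ^ 2 * (u ⬝ᵥ (W *ᵥ u)) ≤ Whi⁻¹ * enorm' u ^ 2 := by
    calc _ ≤ Whi⁻¹ ^ 2 * (Whi * enorm' u ^ 2) := by gcongr
      _ = _ := by field_simp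
  have d : Whi⁻¹ * enorm' u ^ 2 ≤ v ⬝ᵥ u := by linarith
  rwa [inv_mul_le_iff₀ hpos] at d

/-- Mean value estimate. -/
lemma aux_mvt {p : ℕ} (g : (Fin p → ℝ) → (Fin p → ℝ))
    (G : (Fin p → ℝ) → Matrix (Fin p) (Fin p) ℝ) (a b : Fin p → ℝ) (L : ℝ) (hL : 0 ≤ L)
    (hG : ∀ θ, HasFDerivAt g (toCLM (G θ)) θ)
    (hLip : ∀ θ₁ θ₂, sigMax (G θ₁ - G θ₂) ≤ L * enorm' (θ₁ - θ₂)) :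
    enorm' (G b *ᵥ (b - a) - (g b - g a)) ≤ L * enorm' (b - a) ^ 2 := by
  set e := b - a with he
  set w := G b *ᵥ e - (g b - g a) with hw
  have hd : ∀ t : ℝ, HasDerivAt (fun t : ℝ => w ⬝ᵥ (t • (G b *ᵥ e) - g (a + t • e)))
      (w ⬝ᵥ ((G b - G (a + t • e)) *ᵥ e)) t := by
    intro t
    have h1 : HasDerivAt (fun t : ℝ => a + t • e) e t := by
      simpa using ((hasDerivAt_id t).smul_const e).const_add a
    have h2 : HasDerivAt (fun t : ℝ => g (a + t • e)) (G (a + t • e) *ᵥ e) t := by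
      have h := HasFDerivAt.comp_hasDerivAt (f := fun t : ℝ => a + t • e) t (hG (a + t • e)) h1
      exact h
    have h3 : HasDerivAt (fun t : ℝ => t • (G b *ᵥ e)) (G b *ᵥ e) t := by
      simpa using (hasDerivAt_id t).smul_const (G b *ᵥ e)
    have h4 := h3.sub h2
    rw [hasDerivAt_pi] at h4
    rw [sub_mulVec]
    simp only [dotProduct]
    exact HasDerivAt.fun_sum fun i _ => (h4 i).const_mul (w i)
  obtain ⟨t, ht, hh⟩ := exists_hasDerivAt_eq_slope _ _ (zero_lt_one' ℝ)
    (fun t _ => (hd t).continuousAt.continuousWithinAt) (fun t _ => hd t)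
  have hab : a + e = b := by rw [he]; abel
  have e1 : w ⬝ᵥ ((G b - G (a + t • e)) *ᵥ e) = w ⬝ᵥ w := by
    rw [hh]
    simp only [one_smul, zero_smul, hab, add_zero, zero_sub, sub_zero, div_one]
    rw [← dotProduct_sub]
    congr 1
    rw [hw]; abel
  have e2 : b - (a + t • e) = (1 - t) • e := by
    rw [sub_smul, one_smul]; nth_rewrite 1 [← hab]; abel
  have h5 : enorm' ((G b - G (a + t • e)) *ᵥ e) ≤ L * enorm' e ^ 2 := by
    refine (aux_sigMax _ _).trans ?_
    have := hLip b (a + t • e)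
    rw [e2, aux_smul, abs_of_pos (by linarith [ht.2])] at this
    have h6 : (1 - t) * enorm' e ≤ enorm' e := by
      nlinarith [aux_nonneg e, ht.1, ht.2]
    calc _ ≤ (L * ((1 - t) * enorm' e)) * enorm' e :=
          mul_le_mul_of_nonneg_right this (aux_nonneg e)
      _ ≤ (L * enorm' e) * enorm' e := by
          have := aux_nonneg e
          gcongr
      _ = _ := by ring
  have h7 : enorm' w * enorm' w ≤ enorm' w * (L * enorm' e ^ 2) := by
    rw [← sq, aux_sq, ← e1]
    exact (aux_cs _ _).trans (mul_le_mul_of_nonneg_left h5 (aux_nonneg w))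
  rcases (aux_nonneg w).eq_or_lt with h | h
  · rw [← h]; positivity
  · exact le_of_mul_le_mul_left h7 h

/-- One-step bound for the Gauss-Newton update (just-identified). -/
theorem gauss_newton_one_step_bound
    {p : ℕ}
    (g : (Fin p → ℝ) → (Fin p → ℝ))
    (G : (Fin p → ℝ) → Matrix (Fin p) (Fin p) ℝ)
    (W : Matrix (Fin p) (Fin p) ℝ)
    (θhat θk : Fin p → ℝ)
    (L σlo γ Wlo Whi : ℝ)
    (hg : ContDiff ℝ 2 g)
    (hG : ∀ θ, HasFDerivAt g (toCLM (G θ)) θ)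
    (hW : W.PosDef)
    (hWlo : 0 < Wlo) (hWmin : Wlo ≤ lamMin W) (hWmax : lamMax W ≤ Whi)
    (hfoc : (G θhat)ᵀ *ᵥ (W *ᵥ g θhat) = 0)
    (hL : 0 ≤ L)
    (hLip : ∀ θ₁ θ₂, sigMax (G θ₁ - G θ₂) ≤ L * enorm' (θ₁ - θ₂))
    (hσpos : 0 < σlo)
    (hσ : σlo ≤ sigMin (G θk))
    (hγ : γ ∈ Set.Ioo (0 : ℝ) 1) :
    enorm' ((θk - γ • (((G θk)ᵀ * W * G θk)⁻¹ *ᵥ ((G θk)ᵀ *ᵥ (W *ᵥ g θk)))) - θhat)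
      ≤ (1 - γ + γ * (σlo⁻¹ * Real.sqrt (Whi / Wlo) * L * enorm' (θk - θhat)
          + (σlo ^ 2)⁻¹ * (Real.sqrt Whi / Wlo) * L * wnorm W (g θhat)))
        * enorm' (θk - θhat) := by
  obtain ⟨hγ0, hγ1⟩ := hγ
  set e := θk - θhat with he
  set A := G θk with hA
  have hWs : Wᵀ = W := by
    have := hW.1
    rwa [Matrix.IsHermitian, conjTranspose_eq_transpose_of_trivial] at this
  have hlo : ∀ v, Wlo * enorm' v ^ 2 ≤ v ⬝ᵥ (W *ᵥ v) := fun v =>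
    (mul_le_mul_of_nonneg_right hWmin (sq_nonneg _)).trans (aux_lamMin W v)
  have hhi : ∀ v, v ⬝ᵥ (W *ᵥ v) ≤ Whi * enorm' v ^ 2 := fun v =>
    (aux_lamMax W v).trans (mul_le_mul_of_nonneg_right hWmax (sq_nonneg _))
  have hq0 : ∀ v, 0 ≤ v ⬝ᵥ (W *ᵥ v) := fun v => le_trans (by positivity) (hlo v)
  have hσA : ∀ v, σlo * enorm' v ≤ enorm' (A *ᵥ v) := fun v =>
    (mul_le_mul_of_nonneg_right hσ (aux_nonneg _)).trans (aux_sigMin A v)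
  have hne : ∃ v : Fin p → ℝ, enorm' v = 1 := by
    by_contra hcon
    push Not at hcon
    have : sigMin A = 0 := by
      unfold sigMin
      convert Real.sInf_empty
      ext c
      simp [hcon]
    linarith
  have hlh : Wlo ≤ Whi := by
    obtain ⟨v, hv⟩ := hne
    have h1 := hlo v
    have h2 := hhi v
    rw [hv] at h1 h2
    linarith
  have hWhi : 0 < Whi := hWlo.trans_le hlh
  -- the quadratic form of H
  have hH : ∀ v, v ⬝ᵥ ((Aᵀ * W * A) *ᵥ v) = (A *ᵥ v) ⬝ᵥ (W *ᵥ (A *ᵥ v)) := by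
    intro v
    rw [← mulVec_mulVec, ← mulVec_mulVec, dotProduct_mulVec, vecMul_transpose]
  have hHlo : ∀ v, σlo ^ 2 * Wlo * enorm' v ^ 2 ≤ v ⬝ᵥ ((Aᵀ * W * A) *ᵥ v) := by
    intro v
    rw [hH]
    refine le_trans ?_ (hlo _)
    have : (σlo * enorm' v) ^ 2 ≤ enorm' (A *ᵥ v) ^ 2 :=
      pow_le_pow_left₀ (mul_nonneg hσpos.le (aux_nonneg _)) (hσA v) 2
    nlinarith
  have hAu : IsUnit A := by
    rw [← mulVec_injective_iff_isUnit]
    refine (injective_iff_map_eq_zero A.mulVecLin).2 ?_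
    intro v hv
    have h1 := hσA v
    rw [mulVecLin_apply] at hv
    rw [hv, aux_zero] at h1
    exact aux_eq_zero v (le_antisymm (by nlinarith) (aux_nonneg v))
  have hHu : IsUnit (Aᵀ * W * A) := by
    rw [← mulVec_injective_iff_isUnit]
    refine (injective_iff_map_eq_zero (Aᵀ * W * A).mulVecLin).2 ?_
    intro v hv
    have h1 := hHlo v
    rw [mulVecLin_apply] at hv
    rw [hv, dotProduct_zero] at h1
    have : 0 < σlo ^ 2 * Wlo := by positivity
    have h2 : enorm' v ^ 2 = 0 := le_antisymm (by nlinarith) (sq_nonneg _)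
    exact aux_eq_zero v (pow_eq_zero_iff (two_ne_zero)|>.1 h2)
  rw [isUnit_iff_isUnit_det] at hAu hHu
  set y := (Aᵀ * W * A)⁻¹ *ᵥ (Aᵀ *ᵥ (W *ᵥ g θk)) with hy
  have hHy : (Aᵀ * W * A) *ᵥ y = Aᵀ *ᵥ (W *ᵥ g θk) := by
    rw [hy, mulVec_mulVec, mul_nonsing_inv _ hHu, one_mulVec]
  set r := A *ᵥ e - (g θk - g θhat) with hr
  have hrb : enorm' r ≤ L * enorm' e ^ 2 := aux_mvt g G θhat θk L hL hG hLip
  set z := A⁻¹ *ᵥ r with hz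
  have hAz : A *ᵥ z = r := by
    rw [hz, mulVec_mulVec, mul_nonsing_inv _ hAu, one_mulVec]
  have hzb : enorm' z ≤ σlo⁻¹ * (L * enorm' e ^ 2) := by
    have := hσA z
    rw [hAz] at this
    rw [← div_eq_inv_mul, le_div_iff₀ hσpos]
    linarith
  set x := y - (e - z) with hx
  have hHx : (Aᵀ * W * A) *ᵥ x = (A - G θhat)ᵀ *ᵥ (W *ᵥ g θhat) := by
    rw [transpose_sub, sub_mulVec, hfoc, sub_zero, hx, mulVec_sub, hHy, ← mulVec_mulVec,
      ← mulVec_mulVec, mulVec_sub A, hAz, hr, sub_sub_cancel, mulVec_sub, mulVec_sub,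
      sub_sub_cancel]
  set N := wnorm W (g θhat) with hN
  have hWg : enorm' (W *ᵥ g θhat) ≤ Real.sqrt Whi * N := by
    have := aux_W W hWs Whi hWhi hq0 hhi (g θhat)
    rw [hN, wnorm, ← Real.sqrt_mul hWhi.le]
    exact Real.le_sqrt_of_sq_le this
  have hE := aux_nonneg e
  have hN0 : 0 ≤ N := Real.sqrt_nonneg _
  have hxb : enorm' x ≤ (σlo ^ 2)⁻¹ * (Real.sqrt Whi / Wlo) * L * N * enorm' e := by
    have h1 := hHlo x
    rw [hHx, dotProduct_mulVec, vecMul_transpose] at h1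
    have h2 : enorm' ((A - G θhat) *ᵥ x) ≤ L * enorm' e * enorm' x :=
      (aux_sigMax _ _).trans (mul_le_mul_of_nonneg_right (hLip θk θhat) (aux_nonneg x))
    have hX := aux_nonneg x
    have h3 : enorm' ((A - G θhat) *ᵥ x) * enorm' (W *ᵥ g θhat)
        ≤ (L * enorm' e * enorm' x) * (Real.sqrt Whi * N) :=
      mul_le_mul h2 hWg (aux_nonneg _) (by positivity)
    have h4 := h1.trans ((aux_cs _ _).trans h3)
    have hc : 0 < σlo ^ 2 * Wlo := by positivity
    have h5 : σlo ^ 2 * Wlo * enorm' x ≤ L * enorm' e * (Real.sqrt Whi * N) := by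
      rcases hX.eq_or_lt with h | h
      · rw [← h, mul_zero]; positivity
      · refine le_of_mul_le_mul_right ?_ h
        nlinarith
    have h6 : enorm' x ≤ L * enorm' e * (Real.sqrt Whi * N) / (σlo ^ 2 * Wlo) := by
      rw [le_div_iff₀ hc]; linarith
    refine h6.trans (le_of_eq ?_)
    field_simp
  have hs1 : 1 ≤ Real.sqrt (Whi / Wlo) := by
    rw [Real.one_le_sqrt, one_le_div hWlo]; exact hlh
  have hdec : (θk - γ • y) - θhat = (1 - γ) • e + (γ • z + (-γ) • x) := by
    have : y = x + (e - z) := by rw [hx]; abel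
    rw [this]
    have h2 : θk = e + θhat := by rw [he]; abel
    rw [h2]
    module
  rw [hdec]
  have t1 := aux_add ((1 - γ) • e) (γ • z + (-γ) • x)
  have t2 := aux_add (γ • z) ((-γ) • x)
  rw [aux_smul, abs_of_pos (by linarith)] at t1
  rw [aux_smul, aux_smul, abs_neg, abs_of_pos hγ0] at t2
  have hz2 : enorm' z ≤ σlo⁻¹ * Real.sqrt (Whi / Wlo) * L * enorm' e * enorm' e := by
    refine hzb.trans ?_
    have : 0 ≤ σlo⁻¹ * (L * enorm' e ^ 2) := by positivity
    calc _ ≤ σlo⁻¹ * (L * enorm' e ^ 2) * Real.sqrt (Whi / Wlo) := le_mul_of_one_le_right this hs1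
      _ = _ := by ring
  have u1 := mul_le_mul_of_nonneg_left hz2 hγ0.le
  have u2 := mul_le_mul_of_nonneg_left hxb hγ0.le
  refine (t1.trans (add_le_add_right (t2.trans (add_le_add u1 u2)) _)).trans (le_of_eq ?_)
  ring
end
end

section
/- (Grid search accuracy under local strong convexity and global identification.) Let Q : Θ → ℝ be continuous on a compact Θ ⊆ ℝ^p with unique minimizer θ̂, and suppose there exist ε₁ > 0 and 0 < λ̲ ≤ λ̄ < ∞ such that λ̲·‖θ−θ̂‖² ≤ Q(θ) − Q(θ̂) ≤ λ̄·‖θ−θ̂‖² whenever ‖θ−θ̂‖ ≤ ε₁, and there exists ε₂ ∈ (0, ε₁] such that inf over {θ ∈ Θ : ‖θ−θ̂‖ ≥ ε₁} of Q(θ) > Q(θ̂) + λ̄·ε₂². Let θ₁, …, θ_k ∈ Θ be any grid points with min_{1≤ℓ≤k} ‖θ_ℓ − θ̂‖ ≤ ε₂, and let θ̃_k := argmin_{1≤ℓ≤k} Q(θ_ℓ). Then ‖θ̃_k − θ̂‖ ≤ √(λ̄/λ̲) · min_{1≤ℓ≤k} ‖θ_ℓ − θ̂‖. -/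
open Matrix Set MeasureTheory
open scoped BigOperators

noncomputable section

/-- Accuracy of grid search under local strong convexity and global
identification. -/
theorem grid_search_accuracy
    {p : ℕ} (Θ : Set (Fin p → ℝ)) (Q : (Fin p → ℝ) → ℝ)
    (θhat : Fin p → ℝ) (ε₁ ε₂ lamlo lamhi : ℝ)
    (hΘcomp : IsCompact Θ) (hQ : ContinuousOn Q Θ)
    (hθhat : θhat ∈ Θ)
    (hmin : ∀ θ ∈ Θ, θ ≠ θhat → Q θhat < Q θ)
    (hε₁ : 0 < ε₁) (hlamlo : 0 < lamlo) (hlam : lamlo ≤ lamhi)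
    (hlsc : ∀ θ ∈ Θ, enorm' (θ - θhat) ≤ ε₁ →
      lamlo * enorm' (θ - θhat) ^ 2 ≤ Q θ - Q θhat
        ∧ Q θ - Q θhat ≤ lamhi * enorm' (θ - θhat) ^ 2)
    (hε₂ : 0 < ε₂) (hε₂₁ : ε₂ ≤ ε₁)
    (hsep : ∀ θ ∈ Θ, ε₁ ≤ enorm' (θ - θhat) → Q θhat + lamhi * ε₂ ^ 2 < Q θ)
    (k : ℕ) (pts : Fin k → (Fin p → ℝ)) (hpts : ∀ ℓ, pts ℓ ∈ Θ)
    (hclose : (⨅ ℓ, enorm' (pts ℓ - θhat)) ≤ ε₂)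
    (ℓstar : Fin k) (hℓstar : ∀ ℓ, Q (pts ℓstar) ≤ Q (pts ℓ)) :
    enorm' (pts ℓstar - θhat)
      ≤ Real.sqrt (lamhi / lamlo) * ⨅ ℓ, enorm' (pts ℓ - θhat) := by
  haveI : Nonempty (Fin k) := ⟨ℓstar⟩
  obtain ⟨m, hm⟩ := exists_eq_ciInf_of_finite (f := fun ℓ => enorm' (pts ℓ - θhat))
  rw [← hm] at hclose ⊢
  have hhi : 0 < lamhi := lt_of_lt_of_le hlamlo hlam
  have hd0 : 0 ≤ enorm' (pts m - θhat) := Real.sqrt_nonneg _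
  have hs0 : 0 ≤ enorm' (pts ℓstar - θhat) := Real.sqrt_nonneg _
  have h1 := (hlsc (pts m) (hpts m) (hclose.trans hε₂₁)).2
  have h2 := hℓstar m
  have hsq : enorm' (pts m - θhat) ^ 2 ≤ ε₂ ^ 2 := pow_le_pow_left₀ hd0 hclose 2
  have h3 : enorm' (pts ℓstar - θhat) ≤ ε₁ := by
    by_contra hcon
    have h4 := hsep _ (hpts ℓstar) (not_le.mp hcon).le
    have h5 := mul_le_mul_of_nonneg_left hsq hhi.le
    linarith
  have h4 := (hlsc (pts ℓstar) (hpts ℓstar) h3).1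
  have h5 : enorm' (pts ℓstar - θhat) ^ 2 ≤ lamhi / lamlo * enorm' (pts m - θhat) ^ 2 := by
    rw [div_mul_eq_mul_div, le_div_iff₀ hlamlo]
    linarith
  refine (sq_le_sq₀ hs0 (mul_nonneg (Real.sqrt_nonneg _) hd0)).mp ?_
  rw [mul_pow, Real.sq_sqrt (div_pos hhi hlamlo).le]
  exact h5
end
end

section
/- (Gibbs–Boltzmann tail bound for simulated annealing.) Let Θ ⊆ ℝ^p be compact with finite positive Lebesgue volume vol(Θ), Q : Θ → ℝ continuous with unique minimizer θ̂ ∈ interior(Θ), and suppose: (a) there exist ε₁ > 0 and 0 < λ̲ ≤ λ̄ < ∞ with λ̄·‖θ−θ̂‖² ≥ Q(θ) − Q(θ̂) ≥ λ̲·‖θ−θ̂‖² for ‖θ−θ̂‖ ≤ ε₁ (with the ball of radius ε₁ around θ̂ contained in Θ); (b) there exists ε₂ ∈ (0, ε₁] with Q(θ) − Q(θ̂) ≥ λ̄·ε₂² whenever ‖θ−θ̂‖ ≥ ε₁, θ ∈ Θ. Let T_k = T₁/log(k) for k ≥ 2 with T_k ≤ ε₁², and define the Gibbs measure f_k(θ)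 ∝ exp(−[Q(θ)−Q(θ̂)]/T_k) on Θ. Then the f_k-probability of the event {‖θ−θ̂‖ ≥ ε₁} is at most [vol(Θ) / ∫_{‖h‖≤1} exp(−λ̄‖h‖²) dh] · T_k^{−p/2} · k^{−λ̄ε₂²/T₁} = C·(log k)^{p/2}·k^{−λ̄ε₂²/T₁} for an explicit constant C depending only on vol(Θ), λ̄, T₁, p. -/
open Matrix Set MeasureTheory
open scoped BigOperators

noncomputable section

theorem gtb_cont {n : ℕ} : Continuous (enorm' : (Fin n → ℝ) → ℝ) := by
  unfold enorm'
  fun_prop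

theorem gtb_smul {n : ℕ} (c : ℝ) (hc : 0 ≤ c) (v : Fin n → ℝ) :
    enorm' (c • v) = c * enorm' v := by
  unfold enorm'
  have : ∑ i, (c • v) i ^ 2 = c ^ 2 * ∑ i, v i ^ 2 := by
    rw [Finset.mul_sum]
    refine Finset.sum_congr rfl fun i _ => ?_
    simp only [Pi.smul_apply, smul_eq_mul]
    ring
  rw [this, Real.sqrt_mul (sq_nonneg c), Real.sqrt_sq hc]

theorem gtb_compact {n : ℕ} : IsCompact {h : Fin n → ℝ | enorm' h ≤ 1} := by
  have hcl : IsClosed {h : Fin n → ℝ | enorm' h ≤ 1} := isClosed_le gtb_cont continuous_const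
  refine (isCompact_Icc (a := fun _ : Fin n => (-1 : ℝ)) (b := fun _ => 1)).of_isClosed_subset
    hcl ?_
  intro h hh
  have h1 : ∀ i, |h i| ≤ 1 := by
    intro i
    refine le_trans ?_ hh
    unfold enorm'
    rw [← Real.sqrt_sq_eq_abs]
    exact Real.sqrt_le_sqrt (Finset.single_le_sum (f := fun i => h i ^ 2)
      (fun i _ => sq_nonneg _) (Finset.mem_univ i))
  exact ⟨fun i => (abs_le.1 (h1 i)).1, fun i => (abs_le.1 (h1 i)).2⟩

theorem gtb_pos {n : ℕ} (l : ℝ) :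
    0 < ∫ h in {h : Fin n → ℝ | enorm' h ≤ 1}, Real.exp (-l * enorm' h ^ 2) := by
  have hc : Continuous fun h : Fin n → ℝ => Real.exp (-l * enorm' h ^ 2) := by
    have := gtb_cont (n := n)
    fun_prop
  rw [setIntegral_pos_iff_support_of_nonneg_ae]
  · have hs : (Function.support fun h : Fin n → ℝ => Real.exp (-l * enorm' h ^ 2)) = univ := by
      ext h
      simp [Real.exp_ne_zero]
    rw [hs, univ_inter]
    have ho : IsOpen {h : Fin n → ℝ | enorm' h < 1} := isOpen_lt gtb_cont continuous_const
    refine lt_of_lt_of_le (ho.measure_pos volume ⟨0, ?_⟩)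
      (measure_mono fun h (hh : enorm' h < 1) => hh.le)
    simp [enorm']
  · exact Filter.Eventually.of_forall fun h => (Real.exp_pos _).le
  · exact hc.continuousOn.integrableOn_compact gtb_compact

/-- Gibbs–Boltzmann tail bound for simulated annealing. -/
theorem gibbs_tail_bound
    {p : ℕ} (Θ : Set (Fin p → ℝ)) (Q : (Fin p → ℝ) → ℝ)
    (θhat : Fin p → ℝ) (ε₁ ε₂ lamlo lamhi T₁ T : ℝ) (k : ℕ)
    (hΘcomp : IsCompact Θ)
    (hvol0 : volume Θ ≠ 0) (hvolfin : volume Θ < ⊤)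
    (hQ : ContinuousOn Q Θ)
    (hθhat : θhat ∈ interior Θ)
    (hmin : ∀ θ ∈ Θ, θ ≠ θhat → Q θhat < Q θ)
    (hε₁ : 0 < ε₁) (hlamlo : 0 < lamlo) (hlam : lamlo ≤ lamhi)
    (hball : {θ : Fin p → ℝ | enorm' (θ - θhat) ≤ ε₁} ⊆ Θ)
    (ha : ∀ θ : Fin p → ℝ, enorm' (θ - θhat) ≤ ε₁ →
      lamlo * enorm' (θ - θhat) ^ 2 ≤ Q θ - Q θhat
        ∧ Q θ - Q θhat ≤ lamhi * enorm' (θ - θhat) ^ 2)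
    (hε₂ : 0 < ε₂) (hε₂₁ : ε₂ ≤ ε₁)
    (hb : ∀ θ ∈ Θ, ε₁ ≤ enorm' (θ - θhat) → lamhi * ε₂ ^ 2 ≤ Q θ - Q θhat)
    (hT₁ : 0 < T₁) (hk : 2 ≤ k)
    (hT : T = T₁ / Real.log k) (hTsmall : T ≤ ε₁ ^ 2) :
    (∫ θ in {θ ∈ Θ | ε₁ ≤ enorm' (θ - θhat)}, Real.exp (-(Q θ - Q θhat) / T)) /
        (∫ θ in Θ, Real.exp (-(Q θ - Q θhat) / T))
      ≤ ((volume Θ).toReal /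
            ∫ h in {h : Fin p → ℝ | enorm' h ≤ 1}, Real.exp (-lamhi * enorm' h ^ 2))
          * T ^ (-(p : ℝ) / 2) * (k : ℝ) ^ (-(lamhi * ε₂ ^ 2) / T₁)
    ∧ ((volume Θ).toReal /
            ∫ h in {h : Fin p → ℝ | enorm' h ≤ 1}, Real.exp (-lamhi * enorm' h ^ 2))
          * T ^ (-(p : ℝ) / 2) * (k : ℝ) ^ (-(lamhi * ε₂ ^ 2) / T₁)
      = ((volume Θ).toReal * T₁ ^ (-(p : ℝ) / 2) /
            ∫ h in {h : Fin p → ℝ | enorm' h ≤ 1}, Real.exp (-lamhi * enorm' h ^ 2))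
          * Real.log k ^ ((p : ℝ) / 2) * (k : ℝ) ^ (-(lamhi * ε₂ ^ 2) / T₁) := by
  have hlog : 0 < Real.log k := Real.log_pos (by exact_mod_cast hk)
  have hk0 : (0 : ℝ) < k := by
    have : 0 < k := by omega
    exact_mod_cast this
  have hTpos : 0 < T := by rw [hT]; positivity
  have hI := gtb_pos (n := p) lamhi
  set I := ∫ h in {h : Fin p → ℝ | enorm' h ≤ 1}, Real.exp (-lamhi * enorm' h ^ 2) with hIdef
  have hs : 0 < Real.sqrt T := Real.sqrt_pos.2 hTpos
  have hss : Real.sqrt T ^ 2 = T := Real.sq_sqrt hTpos.le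
  have hsε : Real.sqrt T ≤ ε₁ := Real.sqrt_le_iff.2 ⟨hε₁.le, hTsmall⟩
  have hΘm : MeasurableSet Θ := hΘcomp.isClosed.measurableSet
  have hBm : MeasurableSet {h : Fin p → ℝ | enorm' h ≤ 1} :=
    gtb_compact.isClosed.measurableSet
  have hSm : MeasurableSet {θ ∈ Θ | ε₁ ≤ enorm' (θ - θhat)} := by
    have h2 : MeasurableSet {θ : Fin p → ℝ | ε₁ ≤ enorm' (θ - θhat)} := by
      refine measurableSet_le measurable_const ?_
      exact (gtb_cont.comp (continuous_id.sub continuous_const)).measurable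
    exact hΘm.inter h2
  have hfint : IntegrableOn (fun θ => Real.exp (-(Q θ - Q θhat) / T)) Θ := by
    refine ContinuousOn.integrableOn_compact hΘcomp ?_
    exact Real.continuous_exp.comp_continuousOn
      (((hQ.sub continuousOn_const).neg).div_const T)
  -- lower bound on the denominator
  have hD : T ^ ((p : ℝ) / 2) * I ≤ ∫ θ in Θ, Real.exp (-(Q θ - Q θhat) / T) := by
    let g : (Fin p → ℝ) → ℝ := indicator {h : Fin p → ℝ | enorm' h ≤ 1}
      (fun h => Real.exp (-lamhi * enorm' h ^ 2))
    have hcv : ∫ θ, g ((Real.sqrt T)⁻¹ • (θ - θhat)) = T ^ ((p : ℝ) / 2) * I := by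
      rw [integral_sub_right_eq_self (fun θ => g ((Real.sqrt T)⁻¹ • θ)) θhat,
        Measure.integral_comp_smul, integral_indicator hBm, ← hIdef, smul_eq_mul]
      congr 1
      rw [Module.finrank_fin_fun, inv_pow, inv_inv, abs_of_pos (by positivity),
        Real.sqrt_eq_rpow, ← Real.rpow_natCast, ← Real.rpow_mul hTpos.le]
      congr 1
      ring
    rw [← hcv, ← integral_indicator hΘm]
    refine integral_mono_of_nonneg (Filter.Eventually.of_forall fun θ => ?_)
      ((integrable_indicator_iff hΘm).2 hfint) (Filter.Eventually.of_forall fun θ => ?_)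
    · exact indicator_nonneg (fun h _ => (Real.exp_pos _).le) _
    · have hnn : 0 ≤ indicator Θ (fun θ => Real.exp (-(Q θ - Q θhat) / T)) θ :=
        indicator_nonneg (fun h _ => (Real.exp_pos _).le) _
      by_cases hm : enorm' ((Real.sqrt T)⁻¹ • (θ - θhat)) ≤ 1
      · have e1 : g ((Real.sqrt T)⁻¹ • (θ - θhat)) =
            Real.exp (-lamhi * enorm' ((Real.sqrt T)⁻¹ • (θ - θhat)) ^ 2) :=
          indicator_of_mem (s := {h : Fin p → ℝ | enorm' h ≤ 1}) hm _
        have hsm := gtb_smul (Real.sqrt T)⁻¹ (inv_pos.2 hs).le (θ - θhat)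
        have hle : enorm' (θ - θhat) ≤ ε₁ := by
          rw [hsm, inv_mul_le_iff₀ hs, mul_one] at hm
          exact hm.trans hsε
        have hmem : θ ∈ Θ := hball hle
        show g ((Real.sqrt T)⁻¹ • (θ - θhat)) ≤ _
        rw [e1, indicator_of_mem hmem, hsm, mul_pow, inv_pow, hss]
        apply Real.exp_le_exp.2
        rw [le_div_iff₀ hTpos]
        have := (ha θ hle).2
        have e2 : -lamhi * (T⁻¹ * enorm' (θ - θhat) ^ 2) * T
            = -(lamhi * enorm' (θ - θhat) ^ 2) := by
          field_simp
        rw [e2]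
        linarith
      · have e1 : g ((Real.sqrt T)⁻¹ • (θ - θhat)) = 0 :=
          indicator_of_notMem (s := {h : Fin p → ℝ | enorm' h ≤ 1}) hm _
        show g ((Real.sqrt T)⁻¹ • (θ - θhat)) ≤ _
        rw [e1]
        exact hnn
  -- upper bound on the numerator
  have hN : (∫ θ in {θ ∈ Θ | ε₁ ≤ enorm' (θ - θhat)}, Real.exp (-(Q θ - Q θhat) / T))
      ≤ (volume Θ).toReal * (k : ℝ) ^ (-(lamhi * ε₂ ^ 2) / T₁) := by
    have hc : ∫ θ in Θ, (k : ℝ) ^ (-(lamhi * ε₂ ^ 2) / T₁) =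
        (volume Θ).toReal * (k : ℝ) ^ (-(lamhi * ε₂ ^ 2) / T₁) := by
      rw [setIntegral_const, smul_eq_mul]
      rfl
    rw [← hc, ← integral_indicator hSm, ← integral_indicator hΘm]
    refine integral_mono_of_nonneg (Filter.Eventually.of_forall fun θ => ?_)
      ((integrable_indicator_iff hΘm).2 (integrableOn_const hvolfin.ne))
      (Filter.Eventually.of_forall fun θ => ?_)
    · exact indicator_nonneg (fun h _ => (Real.exp_pos _).le) _
    · by_cases hm : θ ∈ {θ ∈ Θ | ε₁ ≤ enorm' (θ - θhat)}
      · simp only [indicator_of_mem hm, indicator_of_mem hm.1]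
        rw [Real.rpow_def_of_pos hk0]
        apply Real.exp_le_exp.2
        have h1 := hb θ hm.1 hm.2
        have e2 : Real.log k * (-(lamhi * ε₂ ^ 2) / T₁) = -(lamhi * ε₂ ^ 2) / T := by
          rw [hT]
          field_simp
        rw [e2]
        exact div_le_div_of_nonneg_right (by linarith) hTpos.le
      · simp only [indicator_of_notMem hm]
        exact indicator_nonneg (fun h _ => (Real.rpow_nonneg hk0.le _)) _
  have hTp : 0 < T ^ ((p : ℝ) / 2) := Real.rpow_pos_of_pos hTpos _
  constructor
  · have hneg : T ^ (-(p : ℝ) / 2) = (T ^ ((p : ℝ) / 2))⁻¹ := by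
      rw [neg_div, Real.rpow_neg hTpos.le]
    calc _ ≤ ((volume Θ).toReal * (k : ℝ) ^ (-(lamhi * ε₂ ^ 2) / T₁)) /
          (T ^ ((p : ℝ) / 2) * I) := by
          apply div_le_div₀ _ hN (by positivity) hD
          positivity
      _ = _ := by
          rw [hneg]
          field_simp
  · have e : T ^ (-(p : ℝ) / 2) = T₁ ^ (-(p : ℝ) / 2) * Real.log k ^ ((p : ℝ) / 2) := by
      rw [hT, Real.div_rpow hT₁.le hlog.le, neg_div, Real.rpow_neg hlog.le, div_inv_eq_mul]
    rw [e]
    ring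
end
end
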